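/- arXiv:2310.16316 — 2 statements merged into one kernel-verified Lean document; each statement's English description precedes it below -/
import Mathlib

section
/- Let d ≥ 2, let p₁ : ℝ^d → ℝ be the monomial model p₁(x) = ∏_{i=1}^d x_i, and let x = 1_d. For every feature attribution α ∈ ℝ^d, the total deletion error over all nonempty subsets is at least d − 1: Σ_{∅ ≠ S ⊆ {1,…,d}} |1 − Σ_{i∈S} α_i| ≥ d − 1. (In particular, this total already exceeds d − 1 when restricted to the d singleton subsets together with the full subset {1,…,d}.) -/
/-!
For a nonempty finite set `s` and a constant `c`, the signed errors satisfy
`∑ i ∈ s, (c - α i) - (c - ∑ i ∈ s, α i) = (#s - 1) • c`, because the attributions cancel. By the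
triangle inequality the singletons and `s` itself therefore already account for a total error of
at least `|(#s - 1) • c|`. They are distinct nonempty subsets of `s` once `s` has two elements.
-/

open Finset

variable {ι M : Type*}

theorem sum_singleton_add_le_sum_nonempty_subsets [AddCommMonoid M] [PartialOrder M]
    [IsOrderedAddMonoid M] {s : Finset ι} (hs : s.Nontrivial) {f : Finset ι → M}
    (hf : ∀ S ⊆ s, S.Nonempty → 0 ≤ f S) :
    ∑ i ∈ s, f {i} + f s ≤ ∑ S ∈ s.powerset with S.Nonempty, f S := by
  let singletons : Finset (Finset ι) := s.map ⟨singleton, singleton_injective⟩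
  have not_mem_singletons : s ∉ singletons := by
    simp only [singletons, mem_map, Function.Embedding.coeFn_mk, not_exists, not_and]
    exact fun i _ h => hs.ne_singleton h.symm
  have subset_nonempty : singletons.cons s not_mem_singletons ⊆
      {S ∈ s.powerset | S.Nonempty} := by
    simp [singletons, subset_iff, hs.nonempty]
  calc
    ∑ i ∈ s, f {i} + f s = ∑ S ∈ singletons.cons s not_mem_singletons, f S := by
      simp [singletons, add_comm]
    _ ≤ ∑ S ∈ s.powerset with S.Nonempty, f S :=
      sum_le_sum_of_subset_of_nonneg subset_nonempty fun S hS _ => by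
        obtain ⟨hSs, hS⟩ := mem_filter.mp hS
        exact hf S (mem_powerset.mp hSs) hS

section AddCommGroup

variable [AddCommGroup M]

theorem sum_const_sub_sub_const_sub_sum (s : Finset ι) (α : ι → M) (c : M) :
    ∑ i ∈ s, (c - α i) - (c - ∑ i ∈ s, α i) = ((#s : ℤ) - 1) • c := by
  rw [sum_sub_distrib, sum_const, sub_smul, natCast_zsmul, one_zsmul]
  abel

variable [LinearOrder M] [IsOrderedAddMonoid M]

theorem abs_card_sub_one_zsmul_le_sum_abs_add_abs (s : Finset ι) (α : ι → M) (c : M) :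
    |((#s : ℤ) - 1) • c| ≤ ∑ i ∈ s, |c - α i| + |c - ∑ i ∈ s, α i| :=
  calc
    |((#s : ℤ) - 1) • c| = |∑ i ∈ s, (c - α i) - (c - ∑ i ∈ s, α i)| := by
      rw [sum_const_sub_sub_const_sub_sum]
    _ ≤ |∑ i ∈ s, (c - α i)| + |c - ∑ i ∈ s, α i| := abs_sub _ _
    _ ≤ ∑ i ∈ s, |c - α i| + |c - ∑ i ∈ s, α i| := by
      gcongr
      exact abs_sum_le_sum_abs _ _

theorem monomial_total_deletion_error_ge_d_sub_one_general {s : Finset ι} (hs : s.Nonempty)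
    (α : ι → M) (c : M) :
    |((#s : ℤ) - 1) • c| ≤ ∑ S ∈ s.powerset with S.Nonempty, |c - ∑ i ∈ S, α i| := by
  obtain ⟨i, rfl⟩ | hs := hs.exists_eq_singleton_or_nontrivial
  · simpa using sum_nonneg fun S _ => abs_nonneg (c - ∑ i ∈ S, α i)
  · calc
      |((#s : ℤ) - 1) • c| ≤ ∑ i ∈ s, |c - α i| + |c - ∑ i ∈ s, α i| :=
        abs_card_sub_one_zsmul_le_sum_abs_add_abs s α c
      _ = ∑ i ∈ s, |c - ∑ j ∈ {i}, α j| + |c - ∑ i ∈ s, α i| := by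
        simp only [sum_singleton]
      _ ≤ ∑ S ∈ s.powerset with S.Nonempty, |c - ∑ i ∈ S, α i| :=
        sum_singleton_add_le_sum_nonempty_subsets (f := fun S => |c - ∑ i ∈ S, α i|) hs
          fun _ _ _ => abs_nonneg _

end AddCommGroup

/-- For the monomial model at `x = 1_d` with `d ≥ 2` (where the deletion
error on a nonempty `S` equals `|1 − ∑_{i∈S} α_i|`), every feature attribution `α` has
total deletion error over all nonempty subsets at least `d − 1`. -/
theorem monomial_total_deletion_error_ge_d_sub_one
    (d : ℕ) (hd : 2 ≤ d) (α : Fin d → ℝ) :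
    ∑ S ∈ (Finset.univ : Finset (Fin d)).powerset.filter (fun S => S.Nonempty),
      |1 - ∑ i ∈ S, α i| ≥ (d : ℝ) - 1 := by
  have : NeZero d := ⟨by lia⟩
  simpa using (le_abs_self _).trans
    (monomial_total_deletion_error_ge_d_sub_one_general univ_nonempty α 1)
end

section
/- Let S₁, S₂, S₃ be nonempty pairwise disjoint subsets of {1,…,d}, let G₁ = S₁ ∪ S₂ and G₂ = S₂ ∪ S₃, and let p₂ : ℝ^d → ℝ be the binomial model p₂(x) = ∏_{i∈G₁} x_i + ∏_{j∈G₂} x_j. At the input x = 1_d, there is no feature attribution α ∈ ℝ^d whose insertion error is zero on every subset S ⊆ {1,…,d}; i.e., for every α ∈ ℝ^d there exists S with |p₂(x_S) − p₂(0_d) − Σ_{i∈S} α_i| > 0. -/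
/-!
An attribution without insertion error makes the gain `S ↦ f(x_S) - f(0)` additive on disjoint
unions. The gain of a monomial with nonnegative value at `x` is superadditive, since a nonempty
index set lies in at most one of two disjoint sets. It is strictly superadditive across any
splitting of its own index set into two nonempty parts, and adding a second superadditive gain
cannot repair this failure of additivity.
-/

section Insertion

variable {ι X M : Type*} [DecidableEq ι] [Zero X] [AddCommGroup M]

/-- The gain `f(x_S) - f(0)` of a model `f` from inserting the features in `S` of the input `x`;
the restriction `x_S` is encoded as `S.piecewise x 0`. -/
def insertionGain (f : (ι → X) → M) (x : ι → X) (S : Finset ι) : M :=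
  f (S.piecewise x 0) - f 0

theorem insertionGain_add (f g : (ι → X) → M) (x : ι → X) (S : Finset ι) :
    insertionGain (f + g) x S = insertionGain f x S + insertionGain g x S :=
  add_sub_add_comm _ _ _ _

variable [LinearOrder M]

/-- The insertion error `InsErr(α, S)` of the attribution `α` for the model `f` at the input `x`:
the distance from the gain of `S` to the total attribution of `S`. -/
def insertionError (f : (ι → X) → M) (x : ι → X) (α : ι → M) (S : Finset ι) : M :=
  |insertionGain f x S - ∑ i ∈ S, α i|

theorem exists_insertionError_pos_of_add_lt [IsOrderedAddMonoid M] {f : (ι → X) → M} {x : ι → X}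
    {A B : Finset ι} (hAB : Disjoint A B)
    (hlt : insertionGain f x A + insertionGain f x B < insertionGain f x (A ∪ B)) (α : ι → M) :
    ∃ S, 0 < insertionError f x α S := by
  by_contra! h
  have gain_eq_sum (S : Finset ι) : insertionGain f x S = ∑ i ∈ S, α i :=
    sub_eq_zero.mp (abs_nonpos_iff.mp (h S))
  simp only [gain_eq_sum, Finset.sum_union hAB, lt_self_iff_false] at hlt

end Insertion

section Monomial

variable {ι R : Type*} [CommRing R]

/-- The monomial model on the features in `G`, the summand from which `p₂` is built. -/
def monomialModel (G : Finset ι) (x : ι → R) : R :=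
  ∏ i ∈ G, x i

/-- The binomial model `p₂`; the index sets `G₁` and `G₂` need not be of the form `S₁ ∪ S₂` and
`S₂ ∪ S₃` for disjoint parts. -/
def binomialModel (G₁ G₂ : Finset ι) : (ι → R) → R :=
  monomialModel G₁ + monomialModel G₂

variable [DecidableEq ι] {G : Finset ι} {x : ι → R}

theorem insertionGain_monomialModel (G : Finset ι) (x : ι → R) (S : Finset ι) :
    insertionGain (monomialModel G) x S =
      if G.Nonempty ∧ G ⊆ S then monomialModel G x else 0 := by
  obtain rfl | hG := G.eq_empty_or_nonempty
  · simp [insertionGain, monomialModel]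
  · have eval_restrict :
        monomialModel G (S.piecewise x 0) = if G ⊆ S then monomialModel G x else 0 :=
      Finset.prod_ite_zero
    have eval_zero : monomialModel G (0 : ι → R) = 0 :=
      Finset.prod_eq_zero hG.choose_spec rfl
    simp only [insertionGain, eval_restrict, eval_zero, sub_zero, hG, true_and]

theorem insertionGain_monomialModel_of_not_subset {S : Finset ι} (hGS : ¬G ⊆ S) :
    insertionGain (monomialModel G) x S = 0 := by
  rw [insertionGain_monomialModel, if_neg fun h => hGS h.2]

theorem monotone_insertionGain_monomialModel [Preorder R] (hx : 0 ≤ monomialModel G x) :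
    Monotone (insertionGain (monomialModel G) x) := by
  intro S T hST
  simp only [insertionGain_monomialModel]
  by_cases hS : G.Nonempty ∧ G ⊆ S
  · rw [if_pos hS, if_pos ⟨hS.1, hS.2.trans hST⟩]
  · rw [if_neg hS]
    split_ifs
    exacts [hx, le_rfl]

theorem insertionGain_monomialModel_add_le_union [Preorder R] (hx : 0 ≤ monomialModel G x)
    {A B : Finset ι} (hAB : Disjoint A B) :
    insertionGain (monomialModel G) x A + insertionGain (monomialModel G) x B ≤
      insertionGain (monomialModel G) x (A ∪ B) := by
  by_cases hA : G ⊆ A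
  · by_cases hB : G ⊆ B
    · obtain rfl : G = ∅ := Finset.subset_empty.mp (hAB hA hB)
      simp [insertionGain_monomialModel]
    · rw [insertionGain_monomialModel_of_not_subset hB, add_zero]
      exact monotone_insertionGain_monomialModel hx Finset.subset_union_left
  · rw [insertionGain_monomialModel_of_not_subset hA, zero_add]
    exact monotone_insertionGain_monomialModel hx Finset.subset_union_right

theorem insertionGain_monomialModel_add_lt_union [Preorder R] {A B : Finset ι}
    (hx : 0 < monomialModel (A ∪ B) x) (hAB : Disjoint A B) (hA : A.Nonempty) (hB : B.Nonempty) :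
    insertionGain (monomialModel (A ∪ B)) x A + insertionGain (monomialModel (A ∪ B)) x B <
      insertionGain (monomialModel (A ∪ B)) x (A ∪ B) := by
  have not_subset_left : ¬A ∪ B ⊆ A := fun h =>
    hB.ne_empty (hAB.eq_bot_of_ge (Finset.union_subset_right h))
  have not_subset_right : ¬A ∪ B ⊆ B := fun h =>
    hA.ne_empty (hAB.eq_bot_of_le (Finset.union_subset_left h))
  rw [insertionGain_monomialModel_of_not_subset not_subset_left,
    insertionGain_monomialModel_of_not_subset not_subset_right,
    insertionGain_monomialModel, if_pos ⟨hA.inl, subset_rfl⟩, zero_add]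
  exact hx

theorem binomial_no_attribution_zero_insertion_error_general [LinearOrder R]
    [IsOrderedAddMonoid R] {G₁ G₂ : Finset ι} (hG₁ : G₁.Nontrivial)
    (hx₁ : 0 < monomialModel G₁ x) (hx₂ : 0 ≤ monomialModel G₂ x) (α : ι → R) :
    ∃ S, 0 < insertionError (binomialModel G₁ G₂) x α S := by
  obtain ⟨a, ha⟩ := hG₁.nonempty
  have hsplit : {a} ∪ G₁.erase a = G₁ := Finset.insert_erase ha
  have hdisj : Disjoint {a} (G₁.erase a) :=
    Finset.disjoint_singleton_left.mpr (Finset.notMem_erase a G₁)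
  have gain₁ := insertionGain_monomialModel_add_lt_union (x := x) (hsplit.symm ▸ hx₁) hdisj
    (Finset.singleton_nonempty a) hG₁.erase_nonempty
  have gain₂ := insertionGain_monomialModel_add_le_union hx₂ hdisj
  refine exists_insertionError_pos_of_add_lt hdisj ?_ α
  rw [hsplit] at gain₁ gain₂ ⊢
  simp only [binomialModel, insertionGain_add]
  rw [add_add_add_comm]
  exact add_lt_add_of_lt_of_le gain₁ gain₂

end Monomial

/-- For the binomial model `p₂ x = ∏_{i∈G₁} x i + ∏_{j∈G₂} x j` with
`G₁ = S₁ ∪ S₂`, `G₂ = S₂ ∪ S₃` for nonempty pairwise disjoint `S₁, S₂, S₃`, at the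
input `x = 1_d` no feature attribution has zero insertion error on every subset:
for every `α` there exists `S` with `|p₂(x_S) − p₂(0_d) − ∑_{i∈S} α_i| > 0`. -/
theorem binomial_no_attribution_zero_insertion_error
    (d : ℕ) (S₁ S₂ S₃ : Finset (Fin d))
    (h₁ : S₁.Nonempty) (h₂ : S₂.Nonempty) (h₃ : S₃.Nonempty)
    (h₁₂ : Disjoint S₁ S₂) (h₁₃ : Disjoint S₁ S₃) (h₂₃ : Disjoint S₂ S₃)
    (α : Fin d → ℝ) :
    ∃ S : Finset (Fin d),
      |((∏ i ∈ S₁ ∪ S₂, (if i ∈ S then (1 : ℝ) else 0)) +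
          ∏ j ∈ S₂ ∪ S₃, (if j ∈ S then (1 : ℝ) else 0)) -
        ((∏ _i ∈ S₁ ∪ S₂, (0 : ℝ)) + ∏ _j ∈ S₂ ∪ S₃, (0 : ℝ)) -
        ∑ i ∈ S, α i| > 0 := by
  have hG₁ : (S₁ ∪ S₂).Nontrivial := by
    obtain ⟨a, ha⟩ := h₁
    obtain ⟨b, hb⟩ := h₂
    exact ⟨a, Finset.mem_union_left _ ha, b, Finset.mem_union_right _ hb,
      Finset.disjoint_iff_ne.mp h₁₂ a ha b hb⟩
  exact binomial_no_attribution_zero_insertion_error_general (x := 1) hG₁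
    (Finset.prod_pos fun _ _ => one_pos) (Finset.prod_nonneg fun _ _ => zero_le_one) α
end
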